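/- (Affine Poincaré lemma.) Let A be a finite-dimensional real affine space over V. (i) If a quadratic function δ : A → ℝ with Hessian B satisfies δ(P + v) − δ(P) = (1/2)·B(v, v) for all P ∈ A and v ∈ V, then δ is constant. (ii) Let ω : A → V* be an affine map and let L : V → V* be its linear part, so that L(x)(y) = ω(P + x)(y) − ω(P)(y) for any point P ∈ A. If L is self-adjoint, i.e. L(x)(y) = L(y)(x) for all x, y ∈ V, then there exists a quadratic function δ : A → ℝ such that ω(P)(v) = δ(P + v) − δ(P) − (1/2)·L(v)(v) for all P ∈ A and v ∈ V. -/

import Mathlib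

/-!
For (i), the increment from `P` to `Q` and the increment from `Q` to `P` are negatives of each
other, yet both equal `B(v, v) / 2` with `v = Q - P`, because `B(v, v)` is even in `v`; hence both
vanish.

For (ii), fix an origin `O` and integrate `ω` along the segment from `O` to `P`, which gives
`δ(P) = ω(O)(P - O) + L(P - O)(P - O) / 2`. Symmetry of `L` turns the cross terms in
`δ(P + v) - δ(P)` into `L(P - O)(v) = ω(P)(v) - ω(O)(v)`. The sum of a linear form and a quadratic
form in `P - O` is quadratic by direct expansion.
-/

/-- A function `δ : A → ℝ` on a real affine space is *quadratic* if for all points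
`P, Q` and all `α, β ∈ ℝ` with `α + β = 1`,
`δ(α·P + β·Q) = α(α−β)·δ(P) + β(β−α)·δ(Q) + 4αβ·δ(midpoint(P,Q))`
(note `α·P + β·Q = lineMap P Q β`). -/
def IsQuadraticFn {V A : Type*} [AddCommGroup V] [Module ℝ V] [AddTorsor V A]
    (δ : A → ℝ) : Prop :=
  ∀ (P Q : A) (α β : ℝ), α + β = 1 →
    δ (AffineMap.lineMap P Q β) =
      α * (α - β) * δ P + β * (β - α) * δ Q + 4 * α * β * δ (midpoint ℝ P Q)

/-- `B` is the Hessian of the quadratic function `δ`: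
`2δ(P) + 2δ(Q) − 4δ(midpoint(P,Q)) = (1/2)·B(Q−P, Q−P)` for all `P, Q`. -/
def IsHessianOf {V A : Type*} [AddCommGroup V] [Module ℝ V] [AddTorsor V A]
    (δ : A → ℝ) (B : LinearMap.BilinForm ℝ V) : Prop :=
  ∀ P Q : A, 2 * δ P + 2 * δ Q - 4 * δ (midpoint ℝ P Q) =
    (1/2 : ℝ) * B (Q -ᵥ P) (Q -ᵥ P)

/-- Affine Poincaré lemma.
(i) If a quadratic function `δ : A → ℝ` with (symmetric) Hessian `B` satisfies
`δ(P + v) − δ(P) = (1/2)·B(v,v)` for all `P ∈ A`, `v ∈ V`, then `δ` is constant.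
(ii) If `ω : A → V*` is an affine map whose linear part `L` is self-adjoint, then
there is a quadratic `δ : A → ℝ` with
`ω(P)(v) = δ(P + v) − δ(P) − (1/2)·L(v)(v)` for all `P, v`. -/
theorem stmt2 {V A : Type*} [AddCommGroup V] [Module ℝ V] [AddTorsor V A]
    [FiniteDimensional ℝ V] :
    (∀ (δ : A → ℝ) (B : LinearMap.BilinForm ℝ V), IsQuadraticFn δ →
        (∀ x y, B x y = B y x) → IsHessianOf δ B →
        (∀ (P : A) (v : V), δ (v +ᵥ P) - δ P = (1/2 : ℝ) * B v v) →
        ∀ P Q : A, δ P = δ Q) ∧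
    (∀ ω : A →ᵃ[ℝ] Module.Dual ℝ V,
        (∀ x y : V, ω.linear x y = ω.linear y x) →
        ∃ δ : A → ℝ, IsQuadraticFn δ ∧
          ∀ (P : A) (v : V),
            ω P v = δ (v +ᵥ P) - δ P - (1/2 : ℝ) * ω.linear v v) := by
  constructor
  · intro δ B _ _ _ h P Q
    -- Compare the increments along `P → Q` and `Q → P`: they are opposite, and `B` is even.
    have h₁ := h P (Q -ᵥ P)
    have h₂ := h Q (P -ᵥ Q)
    rw [← neg_vsub_eq_vsub_rev Q P] at h₂
    simp only [map_neg, LinearMap.neg_apply, neg_neg] at h₂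
    rw [neg_vsub_eq_vsub_rev Q P, vsub_vadd] at h₂
    rw [vsub_vadd] at h₁
    linarith
  · intro ω hω
    obtain ⟨O⟩ : Nonempty A := inferInstance
    refine ⟨fun P => ω O (P -ᵥ O) + (1/2 : ℝ) * ω.linear (P -ᵥ O) (P -ᵥ O), ?_, ?_⟩
    · intro P Q α β hαβ
      obtain rfl : α = 1 - β := by linarith
      -- With `u = P - O` and `w = Q - P`, both sides are polynomials in `β` and in the values
      -- of `ω O` and `L` on `u` and `w`.
      have key : ∀ t : ℝ, AffineMap.lineMap P Q t -ᵥ O = t • (Q -ᵥ P) + (P -ᵥ O) := by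
        intro t
        rw [AffineMap.lineMap_apply, vadd_vsub_assoc]
      have hQ : Q -ᵥ O = (Q -ᵥ P) + (P -ᵥ O) := (vsub_add_vsub_cancel Q P O).symm
      simp only [midpoint, key, hQ, map_add, map_smul, LinearMap.add_apply,
        LinearMap.smul_apply, smul_eq_mul, invOf_eq_inv, hω (P -ᵥ O) (Q -ᵥ P)]
      ring
    · intro P v
      have hP : ω P = ω.linear (P -ᵥ O) + ω O := by
        rw [← vadd_eq_add, ← ω.map_vadd, vsub_vadd]
      simp only [hP, vadd_vsub_assoc, map_add, LinearMap.add_apply, hω v (P -ᵥ O)]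
      ring
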